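/- Let a ∈ (−1, 0) and let r : ℝ → ℝ be the fundamental solution, i.e. the unique function with r(s) = 0 for s < 0, r continuous on [0,∞), and r(s) = 1 + a ∫_0^s r(u−1)·χ_{[1,∞)}(u) du for s ≥ 0. Then there exist constants C > 0 and c > 0 such that |r(s)| ≤ C e^{−c s} for all s ≥ 0. -/

import Mathlib

/-!
Write `b = -a ∈ (0, 1)`. For `t > 1` the fundamental solution satisfies `r' t = -b r (t - 1)`, that
is `r' t = -b r t + b (r t - r (t - 1))`, and for `t ≥ 2` the integral equation bounds the last
difference by `b * sup |r|` over `[t - 2, t - 1]` (`abs_sub_delay_le`). So the damping rate `b`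
dominates a delayed perturbation of size `b ^ 2 < b`.

Choose `c > 0` with `c + b ^ 2 * exp (2 * c) < b`, and `C` so large that `|r t| < C exp (-c t)` on
`[0, 3]`. At a first time `T > 3` at which `|r t| exp (c t)` reaches `C`, the history before `T`
satisfies the exponential bound, and the estimate above makes the derivative of
`(r t * exp (c t)) ^ 2` at `T` strictly negative; this contradicts `T` being the first such time.
-/

open MeasureTheory Set

/-- The defining property of the fundamental solution `r` of the delay equation
`dx_s = a x_{s-1} ds`. -/
def IsFundamentalSolution (a : ℝ) (r : ℝ → ℝ) : Prop :=
  (∀ s : ℝ, s < 0 → r s = 0) ∧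
  ContinuousOn r (Set.Ici (0 : ℝ)) ∧
  ∀ s : ℝ, 0 ≤ s →
    r s = 1 + a * ∫ u in (0 : ℝ)..s, r (u - 1) * Set.indicator (Set.Ici (1 : ℝ)) 1 u

/-- On `[1, ∞)` the equation only involves `r` on `[0, ∞)`; replacing `r` by the everywhere
continuous function `u ↦ r (max u 0)` removes its jump at `0`. -/
lemma eq_integral_max {a : ℝ} {r : ℝ → ℝ} (hr : IsFundamentalSolution a r) {t : ℝ} (ht : 1 ≤ t) :
    r t = 1 + a * ∫ u in (1 : ℝ)..t, r (max (u - 1) 0) := by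
  rw [hr.2.2 t (by linarith)]
  congr 2
  have h1 : (fun u => r (u - 1) * Set.indicator (Set.Ici (1 : ℝ)) 1 u)
      = Set.indicator (Set.Ici (1 : ℝ)) (fun u => r (max (u - 1) 0)) := by
    ext u
    by_cases hu : u ∈ Set.Ici (1 : ℝ)
    · have : (1 : ℝ) ≤ u := hu
      simp [hu, max_eq_left (by linarith : (0 : ℝ) ≤ u - 1)]
    · simp [hu]
  have h2 : Set.Ioc 0 t ∩ Set.Ici (1 : ℝ) = Set.Icc 1 t := by
    ext u
    simp only [mem_inter_iff, mem_Ioc, mem_Ici, mem_Icc]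
    constructor
    · rintro ⟨⟨_, h⟩, h'⟩
      exact ⟨h', h⟩
    · rintro ⟨h', h⟩
      exact ⟨⟨by linarith, h⟩, h'⟩
  rw [h1, intervalIntegral.integral_of_le (by linarith), intervalIntegral.integral_of_le ht,
    setIntegral_indicator measurableSet_Ici, h2, integral_Icc_eq_integral_Ioc]

lemma continuous_history {a : ℝ} {r : ℝ → ℝ} (hr : IsFundamentalSolution a r) :
    Continuous fun u : ℝ => r (max (u - 1) 0) :=
  hr.2.1.comp_continuous (by fun_prop) fun _ => mem_Ici.2 (le_max_right _ _)

lemma hasDerivAt_of_one_lt {a : ℝ} {r : ℝ → ℝ} (hr : IsFundamentalSolution a r) {t : ℝ}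
    (ht : 1 < t) : HasDerivAt r (a * r (t - 1)) t := by
  have h := (((continuous_history hr).integral_hasStrictDerivAt 1 t).hasDerivAt.const_mul a).const_add 1
  rw [max_eq_left (by linarith)] at h
  refine h.congr_of_eventuallyEq ?_
  filter_upwards [lt_mem_nhds ht] with s hs
  exact eq_integral_max hr hs.le

lemma abs_sub_delay_le {a : ℝ} {r : ℝ → ℝ} (hr : IsFundamentalSolution a r) {t K : ℝ} (ht : 2 ≤ t)
    (hK : ∀ u, t - 2 ≤ u → u ≤ t - 1 → |r u| ≤ K) : |r t - r (t - 1)| ≤ |a| * K := by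
  have hi := fun x y => (continuous_history hr).intervalIntegrable (μ := volume) x y
  have h : r t - r (t - 1) = a * ∫ u in (t - 1)..t, r (max (u - 1) 0) := by
    rw [eq_integral_max hr (by linarith : 1 ≤ t), eq_integral_max hr (by linarith : 1 ≤ t - 1),
      ← intervalIntegral.integral_interval_sub_left (hi 1 t) (hi 1 (t - 1))]
    ring
  rw [h, abs_mul]
  gcongr
  have h2 := intervalIntegral.norm_integral_le_of_norm_le_const (a := t - 1) (b := t) (C := K)
    (f := fun u => r (max (u - 1) 0)) (by
      intro u hu
      rw [uIoc_of_le (by linarith)] at hu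
      rw [max_eq_left (by linarith [hu.1]), Real.norm_eq_abs]
      exact hK _ (by linarith [hu.1]) (by linarith [hu.2]))
  simpa using h2

lemma exists_rate {b : ℝ} (hb0 : 0 < b) (hb1 : b < 1) :
    ∃ c > (0 : ℝ), c + b ^ 2 * Real.exp (2 * c) < b := by
  have h : Filter.Tendsto (fun c : ℝ => c + b ^ 2 * Real.exp (2 * c)) (nhdsWithin 0 (Ioi 0))
      (nhds (0 + b ^ 2 * Real.exp (2 * 0))) :=
    (Continuous.tendsto (by fun_prop) 0).mono_left nhdsWithin_le_nhds
  have h2 : 0 + b ^ 2 * Real.exp (2 * 0) < b := by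
    simp only [mul_zero, Real.exp_zero]
    nlinarith
  obtain ⟨c, hc, hc'⟩ := ((h.eventually (gt_mem_nhds h2)).and self_mem_nhdsWithin).exists
  exact ⟨c, hc', hc⟩

/-- A function with negative derivative at `T` takes larger values just to the left of `T`. -/
lemma exists_lt_left {y : ℝ → ℝ} {y' T S : ℝ} (hy : HasDerivAt y y' T) (hy' : y' < 0)
    (hS : S < T) : ∃ x, S < x ∧ x < T ∧ y T < y x := by
  have h := ((hasDerivAt_iff_tendsto_slope.1 hy).mono_left
    (nhdsWithin_mono T (s := Iio T) fun x (hx : x < T) => hx.ne)).eventually (gt_mem_nhds hy')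
  obtain ⟨x, ⟨hx, hxT⟩, hSx⟩ := ((h.and self_mem_nhdsWithin).and
    (mem_nhdsWithin_of_mem_nhds (lt_mem_nhds hS))).exists
  refine ⟨x, hSx, hxT, ?_⟩
  have hxT' : x < T := hxT
  rw [slope_def_field, div_neg_iff] at hx
  rcases hx with hx | hx <;> linarith [hx.1, hx.2]

theorem stmt_2 (a : ℝ) (ha : a ∈ Set.Ioo (-1 : ℝ) 0) (r : ℝ → ℝ)
    (hr : IsFundamentalSolution a r) :
    ∃ C > (0 : ℝ), ∃ c > (0 : ℝ), ∀ s : ℝ, 0 ≤ s → |r s| ≤ C * Real.exp (-c * s) := by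
  obtain ⟨ha1, ha0⟩ := ha
  obtain ⟨c, hc0, hc⟩ := exists_rate (b := -a) (by linarith) (by linarith)
  obtain ⟨B, hB⟩ := (isCompact_Icc (a := (0 : ℝ)) (b := 3)).exists_bound_of_continuousOn
    (hr.2.1.mono Icc_subset_Ici_self)
  have hB0 : 0 ≤ B := (norm_nonneg _).trans (hB 0 (by simp))
  set C := (B + 1) * Real.exp (c * 3) with hC
  have hC0 : 0 < C := by positivity
  have hsmall : ∀ t, 0 ≤ t → t ≤ 3 → |r t| * Real.exp (c * t) < C := by
    intro t h0 h3
    have h1 : |r t| < B + 1 := (hB t ⟨h0, h3⟩).trans_lt (by linarith)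
    calc |r t| * Real.exp (c * t) < (B + 1) * Real.exp (c * t) := by gcongr
      _ ≤ C := by rw [hC]; gcongr
  have hmul : ∀ t, |r t| * Real.exp (c * t) ≤ C → |r t| ≤ C * Real.exp (-c * t) := by
    intro t ht
    rw [neg_mul, Real.exp_neg, ← div_eq_mul_inv, le_div_iff₀ (Real.exp_pos _)]
    exact ht
  refine ⟨C, hC0, c, hc0, fun s hs => hmul s ?_⟩
  by_contra! hcon
  -- The first time at which `|r t| * exp (c * t)` reaches `C`.
  have hcl : IsClosed (Ici (0 : ℝ) ∩ (fun t => |r t| * Real.exp (c * t)) ⁻¹' Ici C) :=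
    ContinuousOn.preimage_isClosed_of_isClosed
      (hr.2.1.abs.mul (Continuous.continuousOn (by fun_prop))) isClosed_Ici isClosed_Ici
  have hbdd : BddBelow (Ici (0 : ℝ) ∩ (fun t => |r t| * Real.exp (c * t)) ⁻¹' Ici C) :=
    ⟨0, fun _ hx => hx.1⟩
  have hmem := hcl.csInf_mem ⟨s, hs, hcon.le⟩ hbdd
  have hbefore : ∀ t, 0 ≤ t → t < sInf (Ici (0 : ℝ) ∩ (fun t => |r t| * Real.exp (c * t)) ⁻¹' Ici C)
      → |r t| * Real.exp (c * t) < C := by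
    intro t h0 ht
    by_contra! h
    exact absurd (csInf_le hbdd ⟨h0, h⟩) (not_le.2 ht)
  generalize sInf (Ici (0 : ℝ) ∩ (fun t => |r t| * Real.exp (c * t)) ⁻¹' Ici C) = T at hmem hbefore
  obtain ⟨hT0, hTC⟩ := hmem
  replace hT0 : 0 ≤ T := hT0
  replace hTC : C ≤ |r T| * Real.exp (c * T) := hTC
  have hT3 : 3 < T := by
    by_contra! h
    exact absurd (hsmall T hT0 h) (not_lt.2 hTC)
  have hdiff : |r T - r (T - 1)| ≤ |a| * (C * Real.exp (-c * (T - 2))) := by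
    refine abs_sub_delay_le hr (by linarith) fun u hu1 hu2 => ?_
    refine (hmul u (hbefore u (by linarith) (by linarith)).le).trans ?_
    gcongr C * Real.exp ?_
    nlinarith
  have hK : C * Real.exp (-c * (T - 2)) ≤ |r T| * Real.exp (2 * c) := by
    have h : Real.exp (-c * (T - 2)) = Real.exp (2 * c) * Real.exp (-(c * T)) := by
      rw [← Real.exp_add]; ring_nf
    have h' : C * Real.exp (-(c * T)) ≤ |r T| := by
      rwa [Real.exp_neg, ← div_eq_mul_inv, div_le_iff₀ (Real.exp_pos _)]
    rw [h]
    nlinarith [Real.exp_pos (2 * c)]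
  have hRpos : 0 < |r T| := pos_of_mul_pos_left (hC0.trans_le hTC) (Real.exp_pos _).le
  have hneg : r T * (a * r (T - 1) + c * r T) < 0 := by
    rw [abs_of_neg ha0] at hdiff
    have h1 : -a * (r T * (r T - r (T - 1))) ≤ (-a) ^ 2 * Real.exp (2 * c) * |r T| ^ 2 := by
      calc -a * (r T * (r T - r (T - 1))) ≤ -a * (|r T| * |r T - r (T - 1)|) := by
            rw [← abs_mul]
            exact mul_le_mul_of_nonneg_left (le_abs_self _) (by linarith)
        _ ≤ -a * (|r T| * (-a * (|r T| * Real.exp (2 * c)))) := by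
            refine mul_le_mul_of_nonneg_left (mul_le_mul_of_nonneg_left
              (hdiff.trans (mul_le_mul_of_nonneg_left hK (by linarith))) hRpos.le) (by linarith)
        _ = _ := by ring
    have h2 : r T * (a * r (T - 1) + c * r T)
        = (c - -a) * |r T| ^ 2 + -a * (r T * (r T - r (T - 1))) := by
      rw [sq_abs]; ring
    have h3 : 0 < |r T| ^ 2 := by positivity
    rw [h2]
    nlinarith
  have hexp : HasDerivAt (fun t => Real.exp (c * t)) (Real.exp (c * T) * (c * 1)) T :=
    ((hasDerivAt_id T).const_mul c).exp
  have hder := ((hasDerivAt_of_one_lt hr (by linarith : 1 < T)).mul hexp).pow 2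
  obtain ⟨x, hx0, hxT, hx⟩ := exists_lt_left hder (S := 0) (by
    have h : 0 < Real.exp (c * T) ^ 2 := by positivity
    simp only [Pi.mul_apply]
    have := mul_neg_of_pos_of_neg h hneg
    norm_num
    nlinarith) (by linarith)
  simp only [Pi.pow_apply, Pi.mul_apply] at hx
  have hlt := sq_lt_sq.1 hx
  rw [abs_mul, abs_mul, Real.abs_exp, Real.abs_exp] at hlt
  linarith [hbefore x hx0.le hxT]
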